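/- Let c ≠ 0, set s₀ = (c² + √(c⁴ + 16))/2, and suppose s, d : (−ε, ε) → ℝ are differentiable functions with s(0) = s₀, d(0) = 0, and F₁(s(A), d(A); A) = 0 and F₂(s(A), d(A); A) = 0 for all |A| < ε. Then d'(0) = (3x/16)·(x·ln((x+4)/(x−4)) − 8), where x = c² + √(c⁴ + 16) = 2s₀ > 4. -/

import Mathlib

/-- $F_1(s,d;A) = (d^2-4)^2(s^2-4)(3Ad+s) + 16c^2(d^2-s^2)$, where $c$ is the angular
momentum. -/
noncomputable def F₁ (c A s d : ℝ) : ℝ :=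
  (d ^ 2 - 4) ^ 2 * (s ^ 2 - 4) * (3 * A * d + s) + 16 * c ^ 2 * (d ^ 2 - s ^ 2)

/-- $F_2(s,d;A) = 3As + d + \frac34 A (d^2-s^2)\ln\frac{s+2}{s-2}$. -/
noncomputable def F₂ (A s d : ℝ) : ℝ :=
  3 * A * s + d + (3 / 4) * A * (d ^ 2 - s ^ 2) * Real.log ((s + 2) / (s - 2))

/-! The equation `F₂ = 0` is affine in `A` and reads `d = A * g(s, d)`. When `s` and `d` are
continuous at `0`, so is the factor `g(s(A), d(A))`; hence `d` is differentiable at `0` with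
derivative `g(s(0), d(0))`. -/

open Filter Topology

theorem hasDerivAt_of_eventually_eq_add_smul {𝕜 E : Type*} [NontriviallyNormedField 𝕜]
    [NormedAddCommGroup E] [NormedSpace 𝕜 E] {f g : 𝕜 → E} {a : 𝕜}
    (hg : ContinuousAt g a) (hf : ∀ᶠ t in 𝓝 a, f t = f a + (t - a) • g t) :
    HasDerivAt f (g a) a := by
  rw [hasDerivAt_iff_tendsto_slope]
  refine (hg.tendsto.mono_left nhdsWithin_le_nhds).congr' ?_
  filter_upwards [hf.filter_mono nhdsWithin_le_nhds, self_mem_nhdsWithin] with t ht hne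
  rw [slope_def_module, ht, add_sub_cancel_left, inv_smul_smul₀ (sub_ne_zero.mpr hne)]

/-- The ratio `d / A` prescribed by the equation `F₂ A s d = 0`, as a function of `s` and `d`. -/
noncomputable def shiftRatio (s d : ℝ) : ℝ :=
  (3 / 4) * (s ^ 2 - d ^ 2) * Real.log ((s + 2) / (s - 2)) - 3 * s

theorem F₂_eq_zero_iff {A s d : ℝ} : F₂ A s d = 0 ↔ d = A * shiftRatio s d := by
  rw [← sub_eq_zero (a := d), F₂, shiftRatio]
  ring_nf

theorem continuousAt_shiftRatio {X : Type*} [TopologicalSpace X] {s d : X → ℝ} {a : X}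
    (hs : ContinuousAt s a) (hd : ContinuousAt d a) (hne : s a ≠ 2)
    (hne_neg : s a ≠ -2) :
    ContinuousAt (fun t ↦ shiftRatio (s t) (d t)) a := by
  have hsub : s a - 2 ≠ 0 := sub_ne_zero.mpr hne
  have hquot : (s a + 2) / (s a - 2) ≠ 0 :=
    div_ne_zero (mt eq_neg_of_add_eq_zero_left hne_neg) hsub
  unfold shiftRatio
  fun_prop (disch := assumption)

theorem shiftRatio_half_zero (x : ℝ) :
    shiftRatio (x / 2) 0 = (3 * x / 16) * (x * Real.log ((x + 4) / (x - 4)) - 8) := by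
  have hquot : (x / 2 + 2) / (x / 2 - 2) = (x + 4) / (x - 4) := by
    rw [← mul_div_mul_left _ _ (two_ne_zero' ℝ)]
    ring_nf
  rw [shiftRatio, hquot]
  ring

theorem four_lt_sq_add_sqrt {c : ℝ} (hc : c ≠ 0) : 4 < c ^ 2 + √(c ^ 4 + 16) := by
  have hsqrt : 4 ≤ √(c ^ 4 + 16) :=
    Real.le_sqrt_of_sq_le (by linarith [Even.pow_nonneg (by decide : Even 4) c])
  linarith [sq_pos_of_ne_zero hc]

theorem first_order_shift_general {s d : ℝ → ℝ} {x : ℝ} (hx : 4 < x)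
    (hs : ContinuousAt s 0) (hd : ContinuousAt d 0) (hs0 : s 0 = x / 2)
    (hF : ∀ᶠ A in 𝓝 0, F₂ A (s A) (d A) = 0) :
    HasDerivAt d ((3 * x / 16) * (x * Real.log ((x + 4) / (x - 4)) - 8)) 0 := by
  have hd0 : d 0 = 0 := by simpa using F₂_eq_zero_iff.mp hF.self_of_nhds
  have hratio : ContinuousAt (fun A ↦ shiftRatio (s A) (d A)) 0 :=
    continuousAt_shiftRatio hs hd (by linarith) (by linarith)
  have hderiv : HasDerivAt d (shiftRatio (s 0) (d 0)) 0 := by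
    refine hasDerivAt_of_eventually_eq_add_smul hratio ?_
    filter_upwards [hF] with A hA
    simpa [hd0] using F₂_eq_zero_iff.mp hA
  rwa [hs0, hd0, shiftRatio_half_zero] at hderiv

/-- If $c \neq 0$, $s_0 = (c^2+\sqrt{c^4+16})/2$, and $s(A), d(A)$ are differentiable
on $(-\varepsilon,\varepsilon)$ with $s(0) = s_0$, $d(0) = 0$ and
$F_1(s(A),d(A);A) = F_2(s(A),d(A);A) = 0$, then
$d'(0) = \frac{3x}{16}\left(x\ln\frac{x+4}{x-4} - 8\right)$, where
$x = c^2 + \sqrt{c^4+16} = 2s_0 > 4$. -/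
theorem first_order_shift (c : ℝ) (hc : c ≠ 0) (s₀ x : ℝ)
    (hs₀ : s₀ = (c ^ 2 + Real.sqrt (c ^ 4 + 16)) / 2)
    (hx : x = c ^ 2 + Real.sqrt (c ^ 4 + 16))
    (ε : ℝ) (hε : 0 < ε) (sf df : ℝ → ℝ)
    (hsdiff : ∀ A : ℝ, |A| < ε → DifferentiableAt ℝ sf A)
    (hddiff : ∀ A : ℝ, |A| < ε → DifferentiableAt ℝ df A)
    (hsf0 : sf 0 = s₀) (hdf0 : df 0 = 0)
    (hF : ∀ A : ℝ, |A| < ε → F₁ c A (sf A) (df A) = 0 ∧ F₂ A (sf A) (df A) = 0) :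
    deriv df 0 = (3 * x / 16) * (x * Real.log ((x + 4) / (x - 4)) - 8) := by
  have hnear : ∀ᶠ A in 𝓝 (0 : ℝ), |A| < ε := by
    simpa using eventually_abs_sub_lt (0 : ℝ) hε
  exact (first_order_shift_general (hx ▸ four_lt_sq_add_sqrt hc)
    (hsdiff 0 hnear.self_of_nhds).continuousAt (hddiff 0 hnear.self_of_nhds).continuousAt
    (by rw [hsf0, hs₀, hx]) (hnear.mono fun A hA ↦ (hF A hA).2)).deriv
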